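/- For generic β ∈ ℂ, the quantities W_β and w satisfy the nonlinear shift relation W_β·(w̃ − ŵ) = χ_{β,−δ}(ξ+δ)·W̃_β − χ_{β,−ε}(ξ+ε)·Ŵ_β, where W̃_β denotes W_β evaluated at (n+1,m,h) and Ŵ_β at (n,m+1,h), and similarly for w. -/

import Mathlib

open scoped BigOperators

noncomputable section

/-- A period lattice in `ℂ` spanned by two `ℝ`-independent periods. -/
structure EllLattice where
  ω₁ : ℂ
  ω₂ : ℂ
  indep : ∀ a b : ℝ, a • ω₁ + b • ω₂ = 0 → a = 0 ∧ b = 0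

namespace EllLattice

/-- Membership in the lattice `Λ = ℤω₁ + ℤω₂`. -/
def mem (L : EllLattice) (z : ℂ) : Prop := ∃ m n : ℤ, z = m • L.ω₁ + n • L.ω₂

/-- The lattice point with integer coordinates `p = (m, n)`. -/
def per (L : EllLattice) (p : ℤ × ℤ) : ℂ := p.1 • L.ω₁ + p.2 • L.ω₂

/-- The Weierstrass sigma function associated to the lattice, defined by its
Hadamard product over the nonzero lattice points. -/
def sigma (L : EllLattice) (z : ℂ) : ℂ :=
  z * ∏' p : {p : ℤ × ℤ // p ≠ 0},
      ((1 - z / L.per p.1) *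
        Complex.exp (z / L.per p.1 + z ^ 2 / (2 * (L.per p.1) ^ 2)))

/-- The Weierstrass zeta function `ζ = σ′/σ`. -/
def zeta (L : EllLattice) (z : ℂ) : ℂ := deriv L.sigma z / L.sigma z

/-- The Weierstrass `℘`-function `℘ = −ζ′`. -/
def wp (L : EllLattice) (z : ℂ) : ℂ := - deriv L.zeta z

/-- `Φ_ξ(κ) = σ(ξ+κ)/(σ(ξ)σ(κ))`. -/
def Phi (L : EllLattice) (ξ κ : ℂ) : ℂ := L.sigma (ξ + κ) / (L.sigma ξ * L.sigma κ)

/-- The Lamé function `Ψ_ξ(κ) = Φ_ξ(κ)·e^{−ζ(ξ)κ}`. -/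
def Psi (L : EllLattice) (ξ κ : ℂ) : ℂ := L.Phi ξ κ * Complex.exp (-(L.zeta ξ) * κ)

/-- `η_δ(ξ) = ζ(ξ+δ) − ζ(ξ) − ζ(δ)`. -/
def eta (L : EllLattice) (δ ξ : ℂ) : ℂ := L.zeta (ξ + δ) - L.zeta ξ - L.zeta δ

/-- `χ_{α,β}(ξ) = ζ(α) + ζ(β) + ζ(ξ) − ζ(ξ+α+β)`. -/
def chi (L : EllLattice) (α β ξ : ℂ) : ℂ :=
  L.zeta α + L.zeta β + L.zeta ξ - L.zeta (ξ + α + β)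

end EllLattice

open Matrix

/-- All the data entering the elliptic (N,N′)-soliton solutions of the lattice KP system:
a period lattice, lattice parameters `δ, ε, λ`, a base point `ξ₀`, rapidity parameters
`κ_i, κ′_j`, initial plane-wave constants `ρ⁰_i, ν⁰_j` and a constant `N′×N` matrix `C`. -/
structure KPData (N N' : ℕ) where
  L : EllLattice
  del : ℂ
  eps : ℂ
  lam : ℂ
  xi0 : ℂ
  κ : Fin N → ℂ
  κ' : Fin N' → ℂ
  ρ0 : Fin N → ℂ
  ν0 : Fin N' → ℂ
  C : Matrix (Fin N') (Fin N) ℂ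

namespace KPData

variable {N N' : ℕ}

/-- `ξ = ξ₀ + nδ + mε + hλ`. -/
def xi (D : KPData N N') (n m h : ℤ) : ℂ :=
  D.xi0 + n • D.del + m • D.eps + h • D.lam

/-- The plane-wave factor `ρ_i(n,m,h)`. -/
def ρ (D : KPData N N') (i : Fin N) (n m h : ℤ) : ℂ :=
  (Complex.exp (-(D.L.zeta D.del) * D.κ i) * D.L.Psi D.del (-(D.κ i))) ^ n *
  (Complex.exp (-(D.L.zeta D.eps) * D.κ i) * D.L.Psi D.eps (-(D.κ i))) ^ m *
  (Complex.exp (-(D.L.zeta D.lam) * D.κ i) * D.L.Psi D.lam (-(D.κ i))) ^ h *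
  Complex.exp (D.L.zeta (D.xi n m h) * D.κ i) * D.ρ0 i

/-- The plane-wave factor `ν_j(n,m,h)`. -/
def ν (D : KPData N N') (j : Fin N') (n m h : ℤ) : ℂ :=
  (Complex.exp (D.L.zeta D.del * D.κ' j) * D.L.Psi D.del (D.κ' j)) ^ (-n) *
  (Complex.exp (D.L.zeta D.eps * D.κ' j) * D.L.Psi D.eps (D.κ' j)) ^ (-m) *
  (Complex.exp (D.L.zeta D.lam * D.κ' j) * D.L.Psi D.lam (D.κ' j)) ^ (-h) *
  Complex.exp (D.L.zeta (D.xi n m h) * D.κ' j) * D.ν0 j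

/-- The dressed elliptic Cauchy matrix `M_{ij} = ρ_i Ψ_ξ(κ_i + κ′_j) ν_j`. -/
def M (D : KPData N N') (n m h : ℤ) : Matrix (Fin N) (Fin N') ℂ :=
  Matrix.of fun i j => D.ρ i n m h * D.L.Psi (D.xi n m h) (D.κ i + D.κ' j) * D.ν j n m h

/-- The column vector `r = (ρ_i Ψ_ξ(κ_i))_i`. -/
def r (D : KPData N N') (n m h : ℤ) : Fin N → ℂ :=
  fun i => D.ρ i n m h * D.L.Psi (D.xi n m h) (D.κ i)

/-- The column vector `s = (ν_j Ψ_ξ(κ′_j))_j`. -/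
def s (D : KPData N N') (n m h : ℤ) : Fin N' → ℂ :=
  fun j => D.ν j n m h * D.L.Psi (D.xi n m h) (D.κ' j)

/-- The τ-function `τ = det(1 + MC)`. -/
def τ (D : KPData N N') (n m h : ℤ) : ℂ := (1 + D.M n m h * D.C).det

/-- The diagonal matrix `χ_{α,K}(ξ) = diag(χ_{α,κ_i}(ξ))`. -/
def DK (D : KPData N N') (α : ℂ) (n m h : ℤ) : Matrix (Fin N) (Fin N) ℂ :=
  Matrix.diagonal fun i => D.L.chi α (D.κ i) (D.xi n m h)

/-- The diagonal matrix `χ_{β,K′}(ξ) = diag(χ_{β,κ′_j}(ξ))`. -/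
def DK' (D : KPData N N') (β : ℂ) (n m h : ℤ) : Matrix (Fin N') (Fin N') ℂ :=
  Matrix.diagonal fun j => D.L.chi β (D.κ' j) (D.xi n m h)

/-- `W_β = 1 − sᵀ (χ_{β,K′}(ξ))⁻¹ C (1+MC)⁻¹ r`. -/
def W (D : KPData N N') (β : ℂ) (n m h : ℤ) : ℂ :=
  1 - D.s n m h ⬝ᵥ ((D.DK' β n m h)⁻¹ *ᵥ (D.C *ᵥ ((1 + D.M n m h * D.C)⁻¹ *ᵥ D.r n m h)))

/-- `V_α = 1 − sᵀ (1+CM)⁻¹ C (χ_{α,K}(ξ))⁻¹ r`. -/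
def V (D : KPData N N') (α : ℂ) (n m h : ℤ) : ℂ :=
  1 - D.s n m h ⬝ᵥ ((1 + D.C * D.M n m h)⁻¹ *ᵥ (D.C *ᵥ ((D.DK α n m h)⁻¹ *ᵥ D.r n m h)))

/-- `w₀ = sᵀ C (1+MC)⁻¹ r`. -/
def w0 (D : KPData N N') (n m h : ℤ) : ℂ :=
  D.s n m h ⬝ᵥ (D.C *ᵥ ((1 + D.M n m h * D.C)⁻¹ *ᵥ D.r n m h))

/-- `w = ζ(ξ) − w₀ − nζ(δ) − mζ(ε) − hζ(λ)`. -/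
def w (D : KPData N N') (n m h : ℤ) : ℂ :=
  D.L.zeta (D.xi n m h) - D.w0 n m h - n • D.L.zeta D.del - m • D.L.zeta D.eps -
    h • D.L.zeta D.lam

/-- `S_{β,α} = sᵀ (χ_{β,K′}(ξ))⁻¹ C (1+MC)⁻¹ (χ_{α,K}(ξ))⁻¹ r`. -/
def S (D : KPData N N') (β α : ℂ) (n m h : ℤ) : ℂ :=
  D.s n m h ⬝ᵥ ((D.DK' β n m h)⁻¹ *ᵥ
    (D.C *ᵥ ((1 + D.M n m h * D.C)⁻¹ *ᵥ ((D.DK α n m h)⁻¹ *ᵥ D.r n m h))))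

/-- `u_α = (1+MC)⁻¹ (χ_{α,K}(ξ))⁻¹ r`. -/
def u (D : KPData N N') (α : ℂ) (n m h : ℤ) : Fin N → ℂ :=
  (1 + D.M n m h * D.C)⁻¹ *ᵥ ((D.DK α n m h)⁻¹ *ᵥ D.r n m h)

/-- `u₀ = (1+MC)⁻¹ r`. -/
def u0 (D : KPData N N') (n m h : ℤ) : Fin N → ℂ :=
  (1 + D.M n m h * D.C)⁻¹ *ᵥ D.r n m h

/-- the adjoint (row) vector `ᵗu_β = sᵀ (χ_{β,K′}(ξ))⁻¹ (1+CM)⁻¹`. -/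
def tu (D : KPData N N') (β : ℂ) (n m h : ℤ) : Fin N' → ℂ :=
  (D.s n m h ᵥ* (D.DK' β n m h)⁻¹) ᵥ* (1 + D.C * D.M n m h)⁻¹

/-- the adjoint (row) vector `ᵗu₀ = sᵀ (1+CM)⁻¹`. -/
def tu0 (D : KPData N N') (n m h : ℤ) : Fin N' → ℂ :=
  D.s n m h ᵥ* (1 + D.C * D.M n m h)⁻¹

/-- The gauge variable `𝒱_α = Φ_ξ(α)·V_α`. -/
def calV (D : KPData N N') (α : ℂ) (n m h : ℤ) : ℂ :=
  D.L.Phi (D.xi n m h) α * D.V α n m h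

/-- The gauge variable `𝒲_β = Φ_ξ(β)·W_β`. -/
def calW (D : KPData N N') (β : ℂ) (n m h : ℤ) : ℂ :=
  D.L.Phi (D.xi n m h) β * D.W β n m h

/-- The Schwarzian variable `Z_{β,α} = Φ_ξ(α+β)·(1 − χ_{α,β}(ξ)·S_{β,α})`. -/
def Z (D : KPData N N') (β α : ℂ) (n m h : ℤ) : ℂ :=
  D.L.Phi (D.xi n m h) (α + β) * (1 - D.L.chi α β (D.xi n m h) * D.S β α n m h)

/-- Genericity of the parameters (together with finitely many auxiliary points `extra`):
no nontrivial integer combination of `ξ₀, δ, ε, λ`, the rapidity parameters and the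
auxiliary points lies on the lattice.  In particular all arguments of `σ` occurring in
the soliton solutions and their shifts lie outside `Λ`. -/
def Generic {P : ℕ} (D : KPData N N') (extra : Fin P → ℂ) : Prop :=
  ∀ (c0 cn cm ch : ℤ) (a : Fin N → ℤ) (b : Fin N' → ℤ) (e : Fin P → ℤ),
    ¬ (c0 = 0 ∧ cn = 0 ∧ cm = 0 ∧ ch = 0 ∧ a = 0 ∧ b = 0 ∧ e = 0) →
    ¬ D.L.mem (c0 • D.xi0 + cn • D.del + cm • D.eps + ch • D.lam +
      (∑ i, a i • D.κ i) + (∑ j, b j • D.κ' j) + ∑ t, e t • extra t)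

end KPData

/-!
The logarithmic second derivative of the Hadamard product of `σ` is `-℘`, and `℘` is periodic, so
`σ` is quasi-periodic: `σ(z + ω) = A e^{ηz} σ(z)` for `ω ∈ Λ`. By Liouville's theorem, an
entire function that has the same multipliers as `z ↦ σ(z)σ(z + s)` and vanishes at its zeros is a
constant multiple of it; this yields the three-term identity for `σ`. The Fay-type identity for `Φ`
is a special case of it, and the factorisation of `χ` into sigma factors is its derivative at a
zero of `σ`.

By the Fay identity, a lattice shift `ξ ↦ ξ + d` changes the Cauchy matrix `M` by the rank-one
matrix `r s'ᵀ`, where `s'` is the shifted `s`. Hence `(1 + MC)u₀'`, for the shifted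
`u₀' = (1 + M'C)⁻¹r'`, is an explicit diagonal multiple of `r`, and in the difference of two shifts
only a scalar multiple survives: `û₀ - ũ₀ = (w̃ - ŵ)u₀`. Pairing with `sᵀ(χ_{β,K′})⁻¹C` gives the
relation, since the shift of this row vector is again expressed through itself and `s'` by the
addition formula for `χ`.
-/

section LogarithmicDerivative

open Filter Topology

lemma deriv_logDeriv {f : ℂ → ℂ} {z : ℂ} (hf : AnalyticAt ℂ f z) (hz : f z ≠ 0) :
    deriv (logDeriv f) z = (deriv (deriv f) z * f z - deriv f z * deriv f z) / f z ^ 2 :=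
  (hf.deriv.differentiableAt.hasDerivAt.div hf.differentiableAt.hasDerivAt hz).deriv

variable {ι : Type*} {U : Set ℂ} {z : ℂ}

lemma deriv_logDeriv_prod {s : Finset ι} {f : ι → ℂ → ℂ} (hf : ∀ i ∈ s, AnalyticAt ℂ (f i) z)
    (hz : ∀ i ∈ s, f i z ≠ 0) :
    deriv (logDeriv (∏ i ∈ s, f i ·)) z = ∑ i ∈ s, deriv (logDeriv (f i)) z := by
  have hsum : logDeriv (∏ i ∈ s, f i ·) =ᶠ[𝓝 z] fun x => ∑ i ∈ s, logDeriv (f i) x := by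
    have hne : ∀ᶠ x in 𝓝 z, ∀ i ∈ s, f i x ≠ 0 :=
      (Finset.eventually_all s).2 fun i hi => (hf i hi).continuousAt.eventually_ne (hz i hi)
    have hdiff : ∀ᶠ x in 𝓝 z, ∀ i ∈ s, DifferentiableAt ℂ (f i) x :=
      (Finset.eventually_all s).2 fun i hi =>
        (hf i hi).eventually_analyticAt.mono fun _ h => h.differentiableAt
    filter_upwards [hne, hdiff] with x hx hdx using logDeriv_prod hx hdx
  rw [hsum.deriv_eq, deriv_fun_sum]
  exact fun i hi => (hf i hi).deriv.differentiableAt.div (hf i hi).differentiableAt (hz i hi)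

lemma tendsto_deriv_logDeriv {p : Filter ι} [p.NeBot]
    {F : ι → ℂ → ℂ} {f : ℂ → ℂ} (hFf : TendstoLocallyUniformlyOn F f p U)
    (hF : ∀ i, DifferentiableOn ℂ (F i) U) (hU : IsOpen U) (hz : z ∈ U) (hne : f z ≠ 0) :
    Tendsto (fun i => deriv (logDeriv (F i)) z) p (𝓝 (deriv (logDeriv f) z)) := by
  have hFf' := hFf.deriv (.of_forall hF) hU
  have hFf'' := hFf'.deriv (.of_forall fun i => (hF i).deriv hU) hU
  have h₀ := hFf.tendsto_at hz
  have h₁ := hFf'.tendsto_at hz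
  have h₂ := hFf''.tendsto_at hz
  have hf : DifferentiableOn ℂ f U := hFf.differentiableOn (.of_forall hF) hU
  rw [deriv_logDeriv (hf.analyticAt (hU.mem_nhds hz)) hne]
  refine (((h₂.mul h₀).sub (h₁.mul h₁)).div (h₀.pow 2) (pow_ne_zero 2 hne)).congr' ?_
  filter_upwards [h₀.eventually_ne hne] with i hi
  exact (deriv_logDeriv ((hF i).analyticAt (hU.mem_nhds hz)) hi).symm

lemma hasSum_deriv_logDeriv {f : ι → ℂ → ℂ} {g : ℂ → ℂ}
    (hfg : HasProdLocallyUniformlyOn f g U) (hf : ∀ i, DifferentiableOn ℂ (f i) U)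
    (hU : IsOpen U) (hz : z ∈ U) (hfz : ∀ i, f i z ≠ 0) (hgz : g z ≠ 0) :
    HasSum (fun i => deriv (logDeriv (f i)) z) (deriv (logDeriv g) z) := by
  have hlim := tendsto_deriv_logDeriv
    (hasProdLocallyUniformlyOn_iff_tendstoLocallyUniformlyOn.1 hfg)
    (fun s => DifferentiableOn.fun_finsetProd fun i _ => hf i) hU hz hgz
  rw [HasSum, SummationFilter.unconditional_filter]
  exact hlim.congr fun s =>
    deriv_logDeriv_prod (fun i _ => (hf i).analyticAt (hU.mem_nhds hz)) fun i _ => hfz i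

end LogarithmicDerivative

section WeierstrassFactor

open Topology

/-- The Weierstrass elementary factor `E₂(w) = (1 - w) exp(w + w² / 2)` of genus two. -/
def weierstrassFactor (w : ℂ) : ℂ := (1 - w) * Complex.exp (w + w ^ 2 / 2)

lemma weierstrassFactor_zero : weierstrassFactor 0 = 1 := by
  simp [weierstrassFactor]

lemma weierstrassFactor_ne_zero {w : ℂ} (hw : w ≠ 1) : weierstrassFactor w ≠ 0 :=
  mul_ne_zero (sub_ne_zero.2 hw.symm) (Complex.exp_ne_zero _)

lemma hasDerivAt_weierstrassFactor (w : ℂ) :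
    HasDerivAt weierstrassFactor (-w ^ 2 * Complex.exp (w + w ^ 2 / 2)) w := by
  have hlin : HasDerivAt (fun w : ℂ => 1 - w) (-1) w := (hasDerivAt_id w).const_sub 1
  have hquad : HasDerivAt (fun w : ℂ => w + w ^ 2 / 2) (1 + w) w :=
    ((hasDerivAt_id w).add (((hasDerivAt_id w).pow 2).div_const 2)).congr_deriv (by simp)
  exact (hlin.mul hquad.cexp).congr_deriv (by ring)

lemma differentiable_weierstrassFactor : Differentiable ℂ weierstrassFactor :=
  fun w => (hasDerivAt_weierstrassFactor w).differentiableAt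

lemma norm_weierstrassFactor_sub_one_le {w : ℂ} (hw : ‖w‖ ≤ 1) :
    ‖weierstrassFactor w - 1‖ ≤ Real.exp 2 * ‖w‖ ^ 3 := by
  have hderiv : ∀ x ∈ Metric.closedBall (0 : ℂ) ‖w‖,
      ‖-x ^ 2 * Complex.exp (x + x ^ 2 / 2)‖ ≤ Real.exp 2 * ‖w‖ ^ 2 := by
    intro x hx
    have hxw : ‖x‖ ≤ ‖w‖ := by simpa using hx
    rw [norm_mul, norm_neg, norm_pow, mul_comm, Complex.norm_exp]
    gcongr
    calc (x + x ^ 2 / 2).re ≤ ‖x + x ^ 2 / 2‖ := Complex.re_le_norm _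
      _ ≤ ‖x‖ + ‖x‖ ^ 2 / 2 := (norm_add_le _ _).trans_eq (by simp)
      _ ≤ 2 := by nlinarith [norm_nonneg x, hxw.trans hw]
  have hmvt := (convex_closedBall (0 : ℂ) ‖w‖).norm_image_sub_le_of_norm_hasDerivWithin_le
    (fun x _ => (hasDerivAt_weierstrassFactor x).hasDerivWithinAt) hderiv
    (Metric.mem_closedBall_self (norm_nonneg w)) (mem_closedBall_zero_iff.2 le_rfl)
  rw [weierstrassFactor_zero, sub_zero] at hmvt
  exact hmvt.trans_eq (by ring)

lemma logDeriv_weierstrassFactor_div {ω z : ℂ} (hω : ω ≠ 0) (hz : z ≠ ω) :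
    logDeriv (fun x => weierstrassFactor (x / ω)) z = 1 / (z - ω) + 1 / ω + z / ω ^ 2 := by
  have hderiv := (hasDerivAt_weierstrassFactor (z / ω)).comp z ((hasDerivAt_id' z).div_const ω)
  have hsub : z - ω ≠ 0 := sub_ne_zero.2 hz
  have hsub' : ω - z ≠ 0 := sub_ne_zero.2 hz.symm
  rw [logDeriv_apply, ← Function.comp_def, hderiv.deriv]
  simp only [weierstrassFactor]
  field_simp [Complex.exp_ne_zero]
  ring

lemma deriv_logDeriv_weierstrassFactor_div {ω z : ℂ} (hω : ω ≠ 0) (hz : z ≠ ω) :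
    deriv (logDeriv fun x => weierstrassFactor (x / ω)) z
      = -(1 / (z - ω) ^ 2 - 1 / ω ^ 2) := by
  have hev : (logDeriv fun x => weierstrassFactor (x / ω)) =ᶠ[𝓝 z]
      fun x => (x - ω)⁻¹ + 1 / ω + x / ω ^ 2 := by
    filter_upwards [isOpen_ne.mem_nhds hz] with x hx
    rw [logDeriv_weierstrassFactor_div hω hx, one_div (x - ω)]
  have hpole := ((hasDerivAt_id' z).sub_const ω).fun_inv (sub_ne_zero.2 hz)
  rw [hev.deriv_eq,
    ((hpole.add_const (1 / ω)).fun_add ((hasDerivAt_id' z).div_const (ω ^ 2))).deriv]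
  ring

end WeierstrassFactor

namespace EllLattice

open Filter Topology

variable (L : EllLattice)

/-- The lattice as a Mathlib `PeriodPair`, which gives access to `PeriodPair.weierstrassP`. -/
def periodPair : PeriodPair where
  ω₁ := L.ω₁
  ω₂ := L.ω₂
  indep := LinearIndependent.pair_iff.2 L.indep

lemma mem_iff_mem_lattice {z : ℂ} : L.mem z ↔ z ∈ L.periodPair.lattice := by
  simp only [mem, PeriodPair.mem_lattice, zsmul_eq_mul, periodPair, eq_comm]

lemma mem_zero : L.mem 0 := ⟨0, 0, by simp⟩

lemma mem_add_right {z ω : ℂ} (hω : L.mem ω) : L.mem (z + ω) ↔ L.mem z := by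
  simp only [mem_iff_mem_lattice] at *
  exact Submodule.add_mem_iff_left _ hω

lemma range_per : Set.range L.per = {z | L.mem z} := by
  ext z
  simp only [Set.mem_range, Prod.exists, per, Set.mem_ofPred_eq, mem, eq_comm]

lemma mem_per (p : ℤ × ℤ) : L.mem (L.per p) := L.range_per.le ⟨p, rfl⟩

lemma per_eq_latticeEquivProd_symm (p : ℤ × ℤ) :
    L.per p = (L.periodPair.latticeEquivProd.symm p : ℂ) := by
  rw [PeriodPair.latticeEquiv_symm_apply]
  simp only [per, periodPair, zsmul_eq_mul]

lemma per_ne_zero {p : ℤ × ℤ} (hp : p ≠ 0) : L.per p ≠ 0 := by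
  rw [per_eq_latticeEquivProd_symm]
  simpa using hp

lemma per_neg (p : ℤ × ℤ) : L.per (-p) = -L.per p := by
  simp only [per, Prod.fst_neg, Prod.snd_neg, neg_smul, neg_add]

lemma countable_setOf_mem : {z | L.mem z}.Countable :=
  L.range_per ▸ Set.countable_range _

lemma isOpen_setOf_not_mem : IsOpen {z | ¬ L.mem z} := by
  simp only [mem_iff_mem_lattice]
  exact L.periodPair.isClosed_lattice.isOpen_compl

lemma isPreconnected_setOf_not_mem : IsPreconnected {z | ¬ L.mem z} :=
  (L.countable_setOf_mem.isPathConnected_compl_of_one_lt_rank (by simp)).isConnected.isPreconnected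

lemma dense_setOf_not_mem : Dense {z | ¬ L.mem z} := L.countable_setOf_mem.dense_compl ℂ

lemma summable_inv_norm_per_pow_three :
    Summable fun p : {p : ℤ × ℤ // p ≠ 0} => ‖L.per p‖⁻¹ ^ 3 := by
  have hlattice := ZLattice.summable_norm_pow_inv L.periodPair.lattice 3 (by simp)
  have hprod := L.periodPair.latticeEquivProd.symm.toEquiv.summable_iff.2 hlattice
  refine (hprod.subtype {p | p ≠ 0}).congr fun p => ?_
  simp [per_eq_latticeEquivProd_symm]

section SigmaProduct

/-- The product part of `σ`, normalised so that `σ z = z * sigmaProd z`. -/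
def sigmaProd (z : ℂ) : ℂ := ∏' p : {p : ℤ × ℤ // p ≠ 0}, weierstrassFactor (z / L.per p)

lemma sigma_eq_mul_sigmaProd (z : ℂ) : L.sigma z = z * L.sigmaProd z := by
  unfold sigma sigmaProd weierstrassFactor
  congr! 6
  rw [div_pow, mul_comm, ← div_div]

lemma eventually_norm_weierstrassFactor_sub_one_le (R : ℝ) :
    ∀ᶠ p : {p : ℤ × ℤ // p ≠ 0} in cofinite, ∀ z : ℂ, ‖z‖ ≤ R →
      ‖weierstrassFactor (z / L.per p) - 1‖ ≤ Real.exp 2 * R ^ 3 * ‖L.per p‖⁻¹ ^ 3 := by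
  have hsmall : ∀ᶠ p : {p : ℤ × ℤ // p ≠ 0} in cofinite, ‖L.per p‖⁻¹ ^ 3 * R ^ 3 < 1 :=
    (L.summable_inv_norm_per_pow_three.mul_right (R ^ 3)).tendsto_cofinite_zero.eventually_lt_const
      one_pos
  filter_upwards [hsmall] with p hp z hz
  have hratio : ‖z / L.per p‖ ≤ R * ‖L.per p‖⁻¹ := by
    rw [norm_div, div_eq_mul_inv]
    gcongr
  have hle_one : R * ‖L.per p‖⁻¹ ≤ 1 :=
    (lt_of_pow_lt_pow_left₀ 3 zero_le_one (by rwa [mul_comm, mul_pow, one_pow])).le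
  calc ‖weierstrassFactor (z / L.per p) - 1‖ ≤ Real.exp 2 * ‖z / L.per p‖ ^ 3 :=
        norm_weierstrassFactor_sub_one_le (hratio.trans hle_one)
    _ ≤ Real.exp 2 * (R * ‖L.per p‖⁻¹) ^ 3 := by gcongr
    _ = Real.exp 2 * R ^ 3 * ‖L.per p‖⁻¹ ^ 3 := by rw [mul_pow, mul_assoc]

lemma differentiable_weierstrassFactor_div_per (p : ℤ × ℤ) :
    Differentiable ℂ fun z => weierstrassFactor (z / L.per p) :=
  differentiable_weierstrassFactor.comp (differentiable_id.div_const _)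

lemma hasProdLocallyUniformlyOn_sigmaProd :
    HasProdLocallyUniformlyOn
      (fun (p : {p : ℤ × ℤ // p ≠ 0}) z => weierstrassFactor (z / L.per p))
      L.sigmaProd Set.univ := by
  refine hasProdLocallyUniformlyOn_of_forall_compact isOpen_univ fun K _ hK => ?_
  obtain ⟨R, hR⟩ := hK.isBounded.exists_norm_le
  have hbound := (L.eventually_norm_weierstrassFactor_sub_one_le R).mono
    fun p hp z (hz : z ∈ K) => hp z (hR z hz)
  have hprod := Summable.hasProdUniformlyOn_one_add hK
    (L.summable_inv_norm_per_pow_three.mul_left _) hbound fun p =>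
      ((L.differentiable_weierstrassFactor_div_per p).sub_const 1).continuous.continuousOn
  simp only [add_sub_cancel] at hprod
  exact hprod

lemma differentiable_sigmaProd : Differentiable ℂ L.sigmaProd :=
  differentiableOn_univ.1 <|
    (hasProdLocallyUniformlyOn_iff_tendstoLocallyUniformlyOn.1
      L.hasProdLocallyUniformlyOn_sigmaProd).differentiableOn
      (.of_forall fun _ => DifferentiableOn.fun_finsetProd fun p _ =>
        (L.differentiable_weierstrassFactor_div_per p).differentiableOn) isOpen_univ

lemma weierstrassFactor_div_per_ne_zero {z : ℂ} (hz : ¬ L.mem z) {p : ℤ × ℤ} (hp : p ≠ 0) :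
    weierstrassFactor (z / L.per p) ≠ 0 :=
  weierstrassFactor_ne_zero fun h =>
    hz ((div_eq_one_iff_eq (L.per_ne_zero hp)).1 h ▸ L.mem_per p)

lemma sigmaProd_ne_zero {z : ℂ} (hz : ¬ L.mem z) : L.sigmaProd z ≠ 0 := by
  have hsummable : Summable fun p : {p : ℤ × ℤ // p ≠ 0} =>
      ‖weierstrassFactor (z / L.per p) - 1‖ := by
    refine (L.summable_inv_norm_per_pow_three.mul_left
      (Real.exp 2 * ‖z‖ ^ 3)).of_norm_bounded_eventually ?_
    filter_upwards [L.eventually_norm_weierstrassFactor_sub_one_le ‖z‖] with p hp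
    simpa only [norm_norm] using hp z le_rfl
  simpa only [sigmaProd, add_sub_cancel] using tprod_one_add_ne_zero_of_summable
    (fun p => by simpa only [add_sub_cancel] using L.weierstrassFactor_div_per_ne_zero hz p.2)
    hsummable

lemma sigmaProd_zero : L.sigmaProd 0 = 1 := by
  simp [sigmaProd, weierstrassFactor_zero]

lemma sigmaProd_neg (z : ℂ) : L.sigmaProd (-z) = L.sigmaProd z := by
  let negEquiv : {p : ℤ × ℤ // p ≠ 0} ≃ {p : ℤ × ℤ // p ≠ 0} :=
    (Equiv.neg _).subtypeEquiv fun p => by simp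
  rw [sigmaProd, ← negEquiv.tprod_eq]
  exact tprod_congr fun p => by simp [negEquiv, per_neg]

end SigmaProduct

section Sigma

lemma differentiable_sigma : Differentiable ℂ L.sigma := by
  rw [funext L.sigma_eq_mul_sigmaProd]
  exact differentiable_id.mul L.differentiable_sigmaProd

lemma sigma_zero : L.sigma 0 = 0 := by
  rw [sigma_eq_mul_sigmaProd, zero_mul]

lemma deriv_sigma_zero : deriv L.sigma 0 = 1 := by
  rw [funext L.sigma_eq_mul_sigmaProd,
    deriv_fun_mul differentiableAt_fun_id (L.differentiable_sigmaProd 0)]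
  simp [sigmaProd_zero]

lemma sigma_neg (z : ℂ) : L.sigma (-z) = -L.sigma z := by
  rw [sigma_eq_mul_sigmaProd, sigma_eq_mul_sigmaProd, sigmaProd_neg, neg_mul]

lemma deriv_sigma_neg (z : ℂ) : deriv L.sigma (-z) = deriv L.sigma z := by
  have hderiv := congrFun (congrArg deriv (funext L.sigma_neg)) z
  rwa [deriv_comp_neg, deriv.fun_neg, neg_inj] at hderiv

lemma zeta_neg (z : ℂ) : L.zeta (-z) = -L.zeta z := by
  rw [zeta, zeta, sigma_neg, deriv_sigma_neg, div_neg]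

lemma sigma_ne_zero_of_not_mem {z : ℂ} (hz : ¬ L.mem z) : L.sigma z ≠ 0 := by
  rw [sigma_eq_mul_sigmaProd]
  exact mul_ne_zero (fun h => hz (h ▸ L.mem_zero)) (L.sigmaProd_ne_zero hz)

end Sigma

section QuasiPeriodicity

lemma differentiableAt_zeta {z : ℂ} (hz : ¬ L.mem z) : DifferentiableAt ℂ L.zeta z :=
  (L.differentiable_sigma.deriv z).div (L.differentiable_sigma z) (L.sigma_ne_zero_of_not_mem hz)

lemma zeta_eq_inv_add_logDeriv_sigmaProd {z : ℂ} (hz : ¬ L.mem z) :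
    L.zeta z = z⁻¹ + logDeriv L.sigmaProd z := by
  have hz₀ : z ≠ 0 := fun h => hz (h ▸ L.mem_zero)
  rw [zeta, ← logDeriv_apply, funext L.sigma_eq_mul_sigmaProd,
    logDeriv_mul z hz₀ (L.sigmaProd_ne_zero hz) differentiableAt_fun_id
      (L.differentiable_sigmaProd z), logDeriv_id', one_div]

lemma hasSum_deriv_logDeriv_sigmaProd {z : ℂ} (hz : ¬ L.mem z) :
    HasSum (fun p : {p : ℤ × ℤ // p ≠ 0} => -(1 / (z - L.per p) ^ 2 - 1 / L.per p ^ 2))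
      (deriv (logDeriv L.sigmaProd) z) := by
  have hsum := hasSum_deriv_logDeriv L.hasProdLocallyUniformlyOn_sigmaProd
    (fun p => (L.differentiable_weierstrassFactor_div_per p).differentiableOn) isOpen_univ
    (Set.mem_univ z) (fun p => L.weierstrassFactor_div_per_ne_zero hz p.2)
    (L.sigmaProd_ne_zero hz)
  refine hsum.congr_fun fun p => Eq.symm ?_
  exact deriv_logDeriv_weierstrassFactor_div (L.per_ne_zero p.2) fun h => hz (h ▸ L.mem_per p)

lemma wp_eq_weierstrassP {z : ℂ} (hz : ¬ L.mem z) : L.wp z = L.periodPair.weierstrassP z := by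
  have hz₀ : z ≠ 0 := fun h => hz (h ▸ L.mem_zero)
  have hzeta : L.zeta =ᶠ[𝓝 z] fun x => x⁻¹ + logDeriv L.sigmaProd x :=
    (L.isOpen_setOf_not_mem.eventually_mem hz).mono fun _ hx =>
      L.zeta_eq_inv_add_logDeriv_sigmaProd hx
  have hdiff : DifferentiableAt ℂ (logDeriv L.sigmaProd) z :=
    (L.differentiable_sigmaProd.deriv z).div (L.differentiable_sigmaProd z)
      (L.sigmaProd_ne_zero hz)
  have hderiv : L.wp z = 1 / z ^ 2 - deriv (logDeriv L.sigmaProd) z := by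
    rw [wp, hzeta.deriv_eq, deriv_fun_add (differentiableAt_inv hz₀) hdiff, deriv_inv]
    ring
  let F : ℤ × ℤ → ℂ := fun p => 1 / (z - L.per p) ^ 2 - 1 / L.per p ^ 2
  have hF : HasSum F (L.periodPair.weierstrassP z) :=
    (L.periodPair.latticeEquivProd.symm.toEquiv.hasSum_iff.2
      (L.periodPair.hasSum_weierstrassP z)).congr_fun fun p => by
        simp only [F, per_eq_latticeEquivProd_symm]
        rfl
  have hzero : HasSum (F ∘ ((↑) : ({0} : Set (ℤ × ℤ)) → ℤ × ℤ)) (F 0) := hasSum_unique _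
  have hnonzero := (L.hasSum_deriv_logDeriv_sigmaProd hz).neg
  simp only [neg_neg] at hnonzero
  have hF₀ : F 0 = 1 / z ^ 2 := by simp [F, per]
  rw [hderiv, ← hF₀, sub_eq_add_neg]
  exact (hzero.hasSum_compl_iff.1 hnonzero).unique hF

lemma exists_zeta_add_eq {ω : ℂ} (hω : L.mem ω) :
    ∃ η : ℂ, ∀ z, ¬ L.mem z → L.zeta (z + ω) = L.zeta z + η := by
  have hderiv : ∀ z, ¬ L.mem z → HasDerivAt (fun z => L.zeta (z + ω) - L.zeta z) 0 z := by
    intro z hz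
    have hz' : ¬ L.mem (z + ω) := by rwa [L.mem_add_right hω]
    have hshift := (L.differentiableAt_zeta hz').hasDerivAt.comp_add_const z ω
    refine (hshift.sub (L.differentiableAt_zeta hz).hasDerivAt).congr_deriv ?_
    have hwp : L.wp (z + ω) = L.wp z := by
      rw [L.wp_eq_weierstrassP hz, L.wp_eq_weierstrassP hz']
      exact L.periodPair.weierstrassP_add_coe z ⟨ω, L.mem_iff_mem_lattice.1 hω⟩
    simp only [wp, neg_inj] at hwp
    rw [hwp, sub_self]
  obtain ⟨η, hη⟩ := L.isOpen_setOf_not_mem.exists_is_const_of_deriv_eq_zero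
    L.isPreconnected_setOf_not_mem
    (fun z hz => (hderiv z hz).differentiableAt.differentiableWithinAt)
    (fun z hz => (hderiv z hz).deriv)
  exact ⟨η, fun z hz => sub_eq_iff_eq_add'.1 (hη z hz)⟩

lemma exists_sigma_add_eq {ω : ℂ} (hω : L.mem ω) :
    ∃ A η : ℂ, A ≠ 0 ∧ ∀ z, L.sigma (z + ω) = A * Complex.exp (η * z) * L.sigma z := by
  obtain ⟨η, hη⟩ := L.exists_zeta_add_eq hω
  have hderiv : ∀ z, ¬ L.mem z →
      HasDerivAt (fun z => L.sigma (z + ω) * Complex.exp (-η * z) / L.sigma z) 0 z := by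
    intro z hz
    have hz' : ¬ L.mem (z + ω) := by rwa [L.mem_add_right hω]
    have hσ := L.sigma_ne_zero_of_not_mem hz
    have hσ' := L.sigma_ne_zero_of_not_mem hz'
    have hshift := (L.differentiable_sigma (z + ω)).hasDerivAt.comp_add_const z ω
    have hexp := ((hasDerivAt_id' z).const_mul (-η)).cexp
    refine ((hshift.fun_mul hexp).fun_div (L.differentiable_sigma z).hasDerivAt
      hσ).congr_deriv ?_
    have hζ := hη z hz
    rw [zeta, zeta, div_eq_iff hσ'] at hζ
    rw [hζ]
    field_simp
    ring
  obtain ⟨A, hA⟩ := L.isOpen_setOf_not_mem.exists_is_const_of_deriv_eq_zero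
    L.isPreconnected_setOf_not_mem
    (fun z hz => (hderiv z hz).differentiableAt.differentiableWithinAt)
    (fun z hz => (hderiv z hz).deriv)
  have hoff : ∀ z, ¬ L.mem z → L.sigma (z + ω) = A * Complex.exp (η * z) * L.sigma z := by
    intro z hz
    have hσ := L.sigma_ne_zero_of_not_mem hz
    rw [← hA z hz, neg_mul, Complex.exp_neg]
    field_simp
  refine ⟨A, η, ?_, congrFun <| Continuous.ext_on L.dense_setOf_not_mem ?_ ?_ hoff⟩
  · rintro rfl
    obtain ⟨z, hz⟩ := L.dense_setOf_not_mem.nonempty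
    refine L.sigma_ne_zero_of_not_mem ((L.mem_add_right hω).not.2 hz) ?_
    rw [hoff z hz, zero_mul, zero_mul]
  all_goals
    have := L.differentiable_sigma.continuous
    fun_prop

lemma sigma_eq_zero_iff {z : ℂ} : L.sigma z = 0 ↔ L.mem z := by
  refine ⟨not_imp_not.1 fun hz => L.sigma_ne_zero_of_not_mem hz, fun hz => ?_⟩
  obtain ⟨A, η, -, hση⟩ := L.exists_sigma_add_eq hz
  simpa only [zero_add, sigma_zero, mul_zero] using hση 0

lemma deriv_sigma_ne_zero {z : ℂ} (hz : L.sigma z = 0) : deriv L.sigma z ≠ 0 := by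
  obtain ⟨A, η, hA, hση⟩ := L.exists_sigma_add_eq (L.sigma_eq_zero_iff.1 hz)
  have hderiv : deriv L.sigma (0 + z) = A := by
    rw [← deriv_comp_add_const, funext hση, deriv_fun_mul (by fun_prop) (L.differentiable_sigma 0),
      sigma_zero, deriv_sigma_zero]
    simp
  rwa [← zero_add z, hderiv]

lemma dense_sigma_ne_zero : Dense {z | L.sigma z ≠ 0} := by
  simpa only [ne_eq, sigma_eq_zero_iff] using L.dense_setOf_not_mem

end QuasiPeriodicity

end EllLattice

section SimpleZeros

open Filter Topology

variable {f g : ℂ → ℂ}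

lemma dense_ne_zero_of_simple_zeros (hg : Differentiable ℂ g)
    (hsimple : ∀ z, g z = 0 → deriv g z ≠ 0) : Dense {z | g z ≠ 0} := by
  intro z
  by_cases hz : g z = 0
  · have hev := (hg z).hasDerivAt.eventually_ne (c := 0) (hsimple z hz)
    exact mem_closure_iff_frequently.2 (hev.frequently.filter_mono nhdsWithin_le_nhds)
  · exact subset_closure hz

lemma exists_differentiable_eq_mul_of_simple_zeros (hf : Differentiable ℂ f)
    (hg : Differentiable ℂ g) (hsimple : ∀ z, g z = 0 → deriv g z ≠ 0)
    (hzero : ∀ z, g z = 0 → f z = 0) :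
    ∃ q : ℂ → ℂ, Differentiable ℂ q ∧ ∀ z, f z = q z * g z := by
  let q : ℂ → ℂ := fun z => if g z = 0 then deriv f z / deriv g z else f z / g z
  refine ⟨q, fun p => ?_, fun z => ?_⟩
  · by_cases hp : g p = 0
    · have hdslope {h : ℂ → ℂ} (hh : Differentiable ℂ h) : Differentiable ℂ (dslope h p) :=
        differentiableOn_univ.1 <|
          (Complex.differentiableOn_dslope univ_mem).2 hh.differentiableOn
      have hne : dslope g p p ≠ 0 := by rw [dslope_same]; exact hsimple p hp
      refine (((hdslope hf) p).div ((hdslope hg) p) hne).congr_of_eventuallyEq ?_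
      filter_upwards [(hdslope hg).continuous.continuousAt.eventually_ne hne] with x hx
      obtain rfl | hxp := eq_or_ne x p
      · simp only [q, hp, if_true, Pi.div_apply, dslope_same]
      · have hgx : g x = (x - p) * dslope g p x := by
          simpa [hp] using (sub_smul_dslope g p x).symm
        have hfx : f x = (x - p) * dslope f p x := by
          simpa [hzero p hp] using (sub_smul_dslope f p x).symm
        have hxp' : x - p ≠ 0 := sub_ne_zero.2 hxp
        simp only [q, hgx, hfx, mul_eq_zero, hxp', hx, or_self, if_false, Pi.div_apply]
        rw [mul_div_mul_left _ _ hxp']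
    · refine ((hf p).div (hg p) hp).congr_of_eventuallyEq ?_
      filter_upwards [hg.continuous.continuousAt.eventually_ne hp] with x hx
      simp only [q, hx, if_false, Pi.div_apply]
  · by_cases hz : g z = 0
    · rw [hzero z hz, hz, mul_zero]
    · simp only [q, hz, if_false, div_mul_cancel₀ _ hz]

end SimpleZeros

namespace EllLattice

open Filter Topology

variable (L : EllLattice)

section ThreeTermIdentity

lemma apply_eq_apply_of_doubly_periodic {q : ℂ → ℂ} (hq : Differentiable ℂ q)
    (hperiod : ∀ ω, L.mem ω → ∀ z, q (z + ω) = q z) (x y : ℂ) : q x = q y := by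
  refine hq.apply_eq_apply_of_bounded ?_ x y
  have hcompact := (ZSpan.fundamentalDomain_isBounded L.periodPair.basis).isCompact_closure
  refine (hcompact.image hq.continuous).isBounded.subset ?_
  rintro _ ⟨z, rfl⟩
  obtain ⟨ω, hω, -⟩ := ZSpan.exist_unique_vadd_mem_fundamentalDomain L.periodPair.basis z
  have hmem : L.mem (ω : ℂ) := by
    rw [mem_iff_mem_lattice, PeriodPair.lattice_eq_span_range_basis]
    exact ω.2
  refine ⟨z + ω, ?_, hperiod ω hmem z⟩
  rw [add_comm]
  exact subset_closure hω

lemma exists_eq_const_mul_of_common_multiplier {f g : ℂ → ℂ} (hf : Differentiable ℂ f)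
    (hg : Differentiable ℂ g) (hsimple : ∀ z, g z = 0 → deriv g z ≠ 0)
    (hzero : ∀ z, g z = 0 → f z = 0)
    (hmult : ∀ ω, L.mem ω → ∃ B : ℂ → ℂ, (∀ z, B z ≠ 0) ∧
      ∀ z, f (z + ω) = B z * f z ∧ g (z + ω) = B z * g z) :
    ∃ c, ∀ z, f z = c * g z := by
  obtain ⟨q, hq, hfq⟩ := exists_differentiable_eq_mul_of_simple_zeros hf hg hsimple hzero
  have hperiod : ∀ ω, L.mem ω → ∀ z, q (z + ω) = q z := by
    intro ω hω
    obtain ⟨B, hB, hfg⟩ := hmult ω hω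
    have hq' := hq.continuous
    refine congrFun <| Continuous.ext_on (dense_ne_zero_of_simple_zeros hg hsimple)
      (by fun_prop) hq' fun z (hz : g z ≠ 0) => ?_
    obtain ⟨hfz, hgz⟩ := hfg z
    rw [hfq, hfq z, hgz] at hfz
    exact mul_right_cancel₀ (mul_ne_zero (hB z) hz) (hfz.trans (by ring))
  exact ⟨q 0, fun z => by rw [hfq, L.apply_eq_apply_of_doubly_periodic hq hperiod z 0]⟩

lemma sigma_mul_sigma_simple_zeros {s : ℂ} (hs : L.sigma s ≠ 0) (z : ℂ)
    (hz : L.sigma z * L.sigma (z + s) = 0) :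
    deriv (fun z => L.sigma z * L.sigma (z + s)) z ≠ 0 := by
  have hσ := L.differentiable_sigma
  rw [deriv_fun_mul (by fun_prop) (by fun_prop), deriv_comp_add_const]
  have hnot : ¬ (L.sigma z = 0 ∧ L.sigma (z + s) = 0) := by
    rintro ⟨hz₁, hz₂⟩
    rw [sigma_eq_zero_iff] at hz₁ hz₂
    exact hs (L.sigma_eq_zero_iff.2 ((L.mem_add_right hz₁).1 (add_comm z s ▸ hz₂)))
  obtain hz₁ | hz₂ := mul_eq_zero.1 hz
  · simpa [hz₁] using ⟨L.deriv_sigma_ne_zero hz₁, fun h => hnot ⟨hz₁, h⟩⟩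
  · simpa [hz₂] using ⟨fun h => hnot ⟨h, hz₂⟩, L.deriv_sigma_ne_zero hz₂⟩

lemma exists_multiplier_sigma_mul_sigma (s : ℂ) {ω : ℂ} (hω : L.mem ω) :
    ∃ B : ℂ → ℂ, (∀ z, B z ≠ 0) ∧ ∀ z c,
      L.sigma (z + ω - c) * L.sigma (z + ω + c + s) =
        B z * (L.sigma (z - c) * L.sigma (z + c + s)) := by
  obtain ⟨A, η, hA, hση⟩ := L.exists_sigma_add_eq hω
  refine ⟨fun z => A ^ 2 * Complex.exp (η * (2 * z + s)), fun z => by simp [hA], fun z c => ?_⟩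
  have hexp : Complex.exp (η * (2 * z + s)) =
      Complex.exp (η * (z - c)) * Complex.exp (η * (z + c + s)) := by
    rw [← Complex.exp_add]
    ring_nf
  rw [show z + ω - c = z - c + ω by ring, show z + ω + c + s = z + c + s + ω by ring, hση, hση]
  simp only [hexp]
  ring

lemma exists_eq_const_mul_sigma_mul_sigma {s : ℂ} (hs : L.sigma s ≠ 0) {f : ℂ → ℂ}
    (hf : Differentiable ℂ f) (hf_zero : f 0 = 0) (hf_neg : f (-s) = 0)
    (hmult : ∀ ω, L.mem ω → ∃ B : ℂ → ℂ, (∀ z, B z ≠ 0) ∧ ∀ z, f (z + ω) = B z * f z ∧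
      L.sigma (z + ω) * L.sigma (z + ω + s) = B z * (L.sigma z * L.sigma (z + s))) :
    ∃ c, ∀ z, f z = c * (L.sigma z * L.sigma (z + s)) := by
  have hf_add : ∀ {z ω}, L.mem ω → f z = 0 → f (z + ω) = 0 := by
    intro z ω hω hz
    obtain ⟨B, -, hfg⟩ := hmult ω hω
    rw [(hfg z).1, hz, mul_zero]
  have hzero : ∀ z, L.sigma z * L.sigma (z + s) = 0 → f z = 0 := by
    intro z hz
    obtain hz | hz := mul_eq_zero.1 hz
    · simpa using hf_add (L.sigma_eq_zero_iff.1 hz) hf_zero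
    · simpa [add_comm z s] using hf_add (L.sigma_eq_zero_iff.1 hz) hf_neg
  have hσ := L.differentiable_sigma
  exact L.exists_eq_const_mul_of_common_multiplier hf (by fun_prop)
    (L.sigma_mul_sigma_simple_zeros hs) hzero hmult

lemma sigma_three_term_of_ne_zero {s a : ℂ} (hs : L.sigma s ≠ 0) (ha : L.sigma a ≠ 0)
    (has : L.sigma (a + s) ≠ 0) (z b : ℂ) :
    L.sigma z * L.sigma (z + s) * L.sigma (a - b) * L.sigma (a + b + s) +
        L.sigma b * L.sigma (b + s) * L.sigma (z - a) * L.sigma (z + a + s) =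
      L.sigma a * L.sigma (a + s) * L.sigma (z - b) * L.sigma (z + b + s) := by
  let g : ℂ → ℂ := fun z => L.sigma z * L.sigma (z + s)
  let f : ℂ → ℂ := fun z => g z * (L.sigma (a - b) * L.sigma (a + b + s)) +
    g b * (L.sigma (z - a) * L.sigma (z + a + s)) - g a * (L.sigma (z - b) * L.sigma (z + b + s))
  have hmult : ∀ ω, L.mem ω → ∃ B : ℂ → ℂ, (∀ z, B z ≠ 0) ∧
      ∀ z, f (z + ω) = B z * f z ∧ g (z + ω) = B z * g z := by
    intro ω hω
    obtain ⟨B, hB, hσσ⟩ := L.exists_multiplier_sigma_mul_sigma s hω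
    have hg : ∀ z, g (z + ω) = B z * g z := fun z => by simpa using hσσ z 0
    refine ⟨B, hB, fun z => ⟨?_, hg z⟩⟩
    simp only [f, hg, hσσ]
    ring
  have hf_zero : f 0 = 0 := by
    simp only [f, g, zero_add, zero_sub, sigma_zero, zero_mul, sigma_neg]
    ring
  have hf_neg : f (-s) = 0 := by
    simp only [f, g, neg_add_cancel, sigma_zero, mul_zero, zero_mul, zero_add,
      show ∀ c, -s - c = -(c + s) by intro c; ring, show ∀ c, -s + c + s = c by intro c; ring,
      sigma_neg]
    ring
  have hσ := L.differentiable_sigma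
  obtain ⟨c, hc⟩ := L.exists_eq_const_mul_sigma_mul_sigma hs (f := f) (by fun_prop) hf_zero
    hf_neg hmult
  have hfa : f a = 0 := by simp [f, sigma_zero]
  have hc₀ : c = 0 := by
    rw [hc a] at hfa
    exact (mul_eq_zero.1 hfa).resolve_right (mul_ne_zero ha has)
  have hfz := hc z
  rw [hc₀, zero_mul] at hfz
  linear_combination hfz

lemma sigma_three_term (z s a b : ℂ) :
    L.sigma z * L.sigma (z + s) * L.sigma (a - b) * L.sigma (a + b + s) +
        L.sigma b * L.sigma (b + s) * L.sigma (z - a) * L.sigma (z + a + s) =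
      L.sigma a * L.sigma (a + s) * L.sigma (z - b) * L.sigma (z + b + s) := by
  let T : ℂ → ℂ → ℂ := fun s a =>
    L.sigma z * L.sigma (z + s) * L.sigma (a - b) * L.sigma (a + b + s) +
      L.sigma b * L.sigma (b + s) * L.sigma (z - a) * L.sigma (z + a + s) -
      L.sigma a * L.sigma (a + s) * L.sigma (z - b) * L.sigma (z + b + s)
  have hσ := L.differentiable_sigma.continuous
  have hT_of_ne : ∀ a, L.sigma a ≠ 0 → ∀ s, T s a = 0 := by
    intro a ha
    have hdense : Dense ({s | L.mem s} ∪ {s | L.mem (a + s)})ᶜ :=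
      (L.countable_setOf_mem.union <| L.countable_setOf_mem.preimage_of_injOn
        (add_right_injective a).injOn).dense_compl ℂ
    refine congrFun <| Continuous.ext_on hdense (g := 0) (by fun_prop) (by fun_prop) fun s hs => ?_
    simp only [Set.mem_compl_iff, Set.mem_union, not_or, Set.mem_ofPred_eq,
      ← sigma_eq_zero_iff] at hs
    exact sub_eq_zero.2 (L.sigma_three_term_of_ne_zero hs.1 ha hs.2 z b)
  have hT : ∀ a, T s a = 0 :=
    congrFun <| Continuous.ext_on L.dense_sigma_ne_zero (g := 0) (by fun_prop) (by fun_prop)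
      fun a ha => hT_of_ne a ha s
  exact sub_eq_zero.1 (hT a)

end ThreeTermIdentity

section LameFunction

lemma hasDerivAt_sigma_mul_sigma_add (a b z : ℂ) :
    HasDerivAt (fun z => L.sigma (z - a) * L.sigma (z + b))
      (deriv L.sigma (z - a) * L.sigma (z + b) + L.sigma (z - a) * deriv L.sigma (z + b)) z :=
  ((L.differentiable_sigma _).hasDerivAt.comp_sub_const z a).mul
    ((L.differentiable_sigma _).hasDerivAt.comp_add_const z b)

lemma chi_eq_sigma_div {a b c : ℂ} (ha : L.sigma a ≠ 0) (hb : L.sigma b ≠ 0)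
    (hc : L.sigma c ≠ 0) (habc : L.sigma (c + a + b) ≠ 0) :
    L.chi a b c = L.sigma (a + b) * L.sigma (b + c) * L.sigma (c + a) /
      (L.sigma a * L.sigma b * L.sigma c * L.sigma (c + a + b)) := by
  have hσ : ∀ z, L.sigma (z - 0) * L.sigma (z + (a + c)) * (L.sigma (-a - b) * L.sigma (b + c)) +
      L.sigma b * L.sigma (c + a + b) * (L.sigma (z - -a) * L.sigma (z + c)) =
      L.sigma (-a) * L.sigma c * (L.sigma (z - b) * L.sigma (z + (c + a + b))) := by
    intro z
    have hthree := L.sigma_three_term z (a + c) (-a) b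
    rw [show -a + b + (a + c) = b + c by ring, show b + (a + c) = c + a + b by ring,
      show z + -a + (a + c) = z + c by ring, show -a + (a + c) = c by ring,
      show z + b + (a + c) = z + (c + a + b) by ring] at hthree
    rw [sub_zero]
    linear_combination hthree
  have hleft := ((L.hasDerivAt_sigma_mul_sigma_add 0 (a + c) 0).mul_const
      (L.sigma (-a - b) * L.sigma (b + c))).add
    ((L.hasDerivAt_sigma_mul_sigma_add (-a) c 0).const_mul (L.sigma b * L.sigma (c + a + b)))
  have hright := (L.hasDerivAt_sigma_mul_sigma_add b (c + a + b) 0).const_mul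
    (L.sigma (-a) * L.sigma c)
  have hderiv := hleft.unique (hright.congr_of_eventuallyEq (.of_forall hσ))
  rw [sub_zero, sub_neg_eq_add, zero_sub, ← neg_add', add_comm a c] at hderiv
  simp only [zero_add, sigma_zero, deriv_sigma_zero, sigma_neg, deriv_sigma_neg] at hderiv
  simp only [chi, zeta]
  field_simp
  linear_combination hderiv

lemma Phi_neg_neg (x k : ℂ) : L.Phi (-x) (-k) = -L.Phi x k := by
  rw [Phi, Phi, ← neg_add, sigma_neg, sigma_neg, sigma_neg, neg_mul_neg, neg_div]

lemma Phi_fay {x d k k' : ℂ} (hx : L.sigma x ≠ 0) (hd : L.sigma d ≠ 0)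
    (hxd : L.sigma (x + d) ≠ 0) (hk : L.sigma k ≠ 0) (hk' : L.sigma k' ≠ 0)
    (hkk' : L.sigma (k + k') ≠ 0) :
    L.Phi x (k + k') * L.Phi d k' =
      L.Phi x k * L.Phi (x + d) k' + L.Phi d (-k) * L.Phi (x + d) (k + k') := by
  have hσ := L.sigma_three_term x (k' - x) (x + d) (x + k)
  rw [show x + (k' - x) = k' by ring, show x + d - (x + k) = d + -k by ring,
    show x + d + (x + k) + (k' - x) = x + d + (k + k') by ring,
    show x + k + (k' - x) = k + k' by ring, show x - (x + d) = -d by ring,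
    show x + (x + d) + (k' - x) = x + d + k' by ring, show x + d + (k' - x) = d + k' by ring,
    show x - (x + k) = -k by ring, show x + (x + k) + (k' - x) = x + (k + k') by ring,
    sigma_neg, sigma_neg] at hσ
  simp only [Phi, sigma_neg]
  field_simp
  linear_combination hσ

lemma Phi_mul_Phi {x y k : ℂ} (hx : L.sigma x ≠ 0) (hy : L.sigma y ≠ 0) (hk : L.sigma k ≠ 0)
    (hxy : L.sigma (x + y) ≠ 0) (hxyk : L.sigma (x + y + k) ≠ 0) :
    L.Phi x k * L.Phi y k = L.Phi (x + y) k * L.chi x y k := by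
  have hxyk' : k + x + y = x + y + k := by ring
  rw [chi_eq_sigma_div L hx hy hk (hxyk' ▸ hxyk), Phi, Phi, Phi, hxyk', add_comm k x]
  field_simp

lemma Phi_add_mul_Phi_neg {x d k : ℂ} (hx : L.sigma x ≠ 0) (hd : L.sigma d ≠ 0)
    (hxd : L.sigma (x + d) ≠ 0) (hk : L.sigma k ≠ 0) (hxk : L.sigma (x + k) ≠ 0) :
    L.Phi (x + d) k * L.Phi d (-k) =
      L.Phi x k * (L.zeta d - L.zeta (x + d) + L.zeta (x + k) - L.zeta k) := by
  have hd' : L.sigma (-d) ≠ 0 := by rwa [sigma_neg, neg_ne_zero]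
  have hx' : x + d + -d = x := by ring
  have hmul := L.Phi_mul_Phi hxd hd' hk (by rwa [hx']) (by rwa [hx'])
  have hflip : L.Phi (-d) k = -L.Phi d (-k) := by rw [← Phi_neg_neg, neg_neg]
  rw [hx', chi, hflip, zeta_neg, show k + (x + d) + -d = x + k by ring] at hmul
  linear_combination -hmul

lemma Phi_mul_Phi_eq_chi_mul {x β k : ℂ} (hx : L.sigma x ≠ 0) (hβ : L.sigma β ≠ 0)
    (hk : L.sigma k ≠ 0) (hxβ : L.sigma (x + β) ≠ 0) (hxβk : L.sigma (x + β + k) ≠ 0) :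
    L.Phi x k * L.Phi β k = L.chi β k x * L.Phi (x + β) k := by
  rw [L.Phi_mul_Phi hx hβ hk hxβ hxβk, mul_comm, chi, chi]
  ring_nf

lemma chi_neg_mul_Phi {x d β k : ℂ} (hd : L.sigma d ≠ 0)
    (hβ : L.sigma β ≠ 0) (hk : L.sigma k ≠ 0) (hxd : L.sigma (x + d) ≠ 0)
    (hxβ : L.sigma (x + β) ≠ 0) (hxdβ : L.sigma (x + d + β) ≠ 0)
    (hxdβk : L.sigma (x + d + β + k) ≠ 0) :
    L.chi β (-d) (x + d) * L.Phi (x + d + β) k =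
      L.Phi (x + d) k * L.Phi β k - L.Phi d k * L.Phi (x + β) k := by
  have hsum : d + (x + β) = x + d + β := by ring
  rw [L.Phi_mul_Phi hxd hβ hk hxdβ hxdβk,
    L.Phi_mul_Phi hd hxβ hk (by rwa [hsum]) (by rwa [hsum]), hsum, chi, chi, chi, zeta_neg]
  ring_nf

lemma exp_zeta_mul_Psi (x k : ℂ) : Complex.exp (L.zeta x * k) * L.Psi x k = L.Phi x k := by
  rw [Psi, mul_left_comm, ← Complex.exp_add, neg_mul, add_neg_cancel, Complex.exp_zero, mul_one]

lemma exp_neg_zeta_mul_Psi_neg (x k : ℂ) :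
    Complex.exp (-L.zeta x * k) * L.Psi x (-k) = L.Phi x (-k) := by
  rw [neg_mul_comm, exp_zeta_mul_Psi]

end LameFunction

end EllLattice

section RankOneUpdate

variable {ι ι' R : Type*} [Fintype ι] [Fintype ι']

lemma one_add_mul_mulVec_eq_add_smul [DecidableEq ι] [CommRing R] (M : Matrix ι ι' R)
    (C : Matrix ι' ι R) (r : ι → R) (s : ι' → R) (u : ι → R) :
    (1 + M * C) *ᵥ u = (1 + (M - vecMulVec r s) * C) *ᵥ u + (s ⬝ᵥ (C *ᵥ u)) • r := by
  rw [Matrix.sub_mul, ← add_sub_assoc, sub_mulVec, ← mulVec_mulVec _ (vecMulVec r s) C,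
    vecMulVec_mulVec, op_smul_eq_smul, sub_add_cancel]

lemma dotProduct_inv_diagonal_mulVec [DecidableEq ι] [Field R] {v : ι → R} (hv : ∀ i, v i ≠ 0)
    (s c : ι → R) : s ⬝ᵥ ((diagonal v)⁻¹ *ᵥ c) = (s / v) ⬝ᵥ c := by
  have hinv : (diagonal v)⁻¹ = diagonal v⁻¹ := by
    refine inv_eq_right_inv ?_
    simp [diagonal_mul_diagonal, hv]
  rw [hinv]
  refine Finset.sum_congr rfl fun i _ => ?_
  rw [mulVec_diagonal, Pi.div_apply, Pi.inv_apply, div_eq_mul_inv, mul_assoc]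

end RankOneUpdate

namespace KPData

variable {N N' : ℕ} (D : KPData N N') (β d : ℂ) (n m h n' m' h' : ℤ)

section ReducedPlaneWaves

/-- The plane wave `ρ_i` stripped of the factor `e^{ζ(ξ)κ_i}`, which turns `Ψ_ξ` into `Φ_ξ` in
`r` and `M`. -/
def ρred (i : Fin N) : ℂ :=
  D.L.Phi D.del (-D.κ i) ^ n * D.L.Phi D.eps (-D.κ i) ^ m * D.L.Phi D.lam (-D.κ i) ^ h * D.ρ0 i

/-- The plane wave `ν_j` stripped of the factor `e^{ζ(ξ)κ′_j}`, which turns `Ψ_ξ` into `Φ_ξ` in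
`s` and `M`. -/
def νred (j : Fin N') : ℂ :=
  D.L.Phi D.del (D.κ' j) ^ (-n) * D.L.Phi D.eps (D.κ' j) ^ (-m) *
    D.L.Phi D.lam (D.κ' j) ^ (-h) * D.ν0 j

lemma ρ_eq_ρred_mul_exp (i : Fin N) :
    D.ρ i n m h = D.ρred n m h i * Complex.exp (D.L.zeta (D.xi n m h) * D.κ i) := by
  simp only [ρ, ρred, EllLattice.exp_neg_zeta_mul_Psi_neg]
  ring

lemma ν_eq_νred_mul_exp (j : Fin N') :
    D.ν j n m h = D.νred n m h j * Complex.exp (D.L.zeta (D.xi n m h) * D.κ' j) := by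
  simp only [ν, νred, EllLattice.exp_zeta_mul_Psi]
  ring

lemma r_apply (i : Fin N) :
    D.r n m h i = D.ρred n m h i * D.L.Phi (D.xi n m h) (D.κ i) := by
  rw [r, ρ_eq_ρred_mul_exp, mul_assoc, EllLattice.exp_zeta_mul_Psi]

lemma s_apply (j : Fin N') :
    D.s n m h j = D.νred n m h j * D.L.Phi (D.xi n m h) (D.κ' j) := by
  rw [s, ν_eq_νred_mul_exp, mul_assoc, EllLattice.exp_zeta_mul_Psi]

lemma M_apply (i : Fin N) (j : Fin N') :
    D.M n m h i j =
      D.ρred n m h i * D.νred n m h j * D.L.Phi (D.xi n m h) (D.κ i + D.κ' j) := by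
  rw [M, of_apply, ρ_eq_ρred_mul_exp, ν_eq_νred_mul_exp,
    ← D.L.exp_zeta_mul_Psi _ (D.κ i + D.κ' j), mul_add, Complex.exp_add]
  ring

end ReducedPlaneWaves

section GenericStep

/-- Genericity of the data relevant to a shift of `ξ = x` by the lattice parameter `d`: no
nontrivial integer combination of `x`, `d`, `β` and the rapidity parameters is a zero of `σ`. -/
def GenericStep (x : ℂ) : Prop :=
  ∀ (c₀ c₁ e : ℤ) (a : Fin N → ℤ) (b : Fin N' → ℤ),
    ¬ (c₀ = 0 ∧ c₁ = 0 ∧ e = 0 ∧ a = 0 ∧ b = 0) →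
    D.L.sigma (c₀ * x + c₁ * d + e * β + ∑ i, a i * D.κ i + ∑ j, b j * D.κ' j) ≠ 0

variable {D β d n m h}

lemma Generic.sigma_ne_zero (hD : D.Generic ![β]) (c₀ cδ cε e : ℤ) (a : Fin N → ℤ)
    (b : Fin N' → ℤ) (hne : ¬ (c₀ = 0 ∧ cδ = 0 ∧ cε = 0 ∧ e = 0 ∧ a = 0 ∧ b = 0)) :
    D.L.sigma (c₀ * D.xi n m h + cδ * D.del + cε * D.eps + e * β +
      ∑ i, a i * D.κ i + ∑ j, b j * D.κ' j) ≠ 0 := by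
  have hmem := hD c₀ (c₀ * n + cδ) (c₀ * m + cε) (c₀ * h) a b (fun _ => e) (by
    rintro ⟨rfl, hδ, hε, -, ha, hb, he⟩
    exact hne ⟨rfl, by simpa using hδ, by simpa using hε, congrFun he 0, ha, hb⟩)
  rw [Ne, EllLattice.sigma_eq_zero_iff]
  convert hmem using 2
  simp only [xi, zsmul_eq_mul, Int.cast_add, Int.cast_mul, Fin.sum_univ_one,
    cons_val_fin_one]
  ring

lemma Generic.genericStep_del (hD : D.Generic ![β]) :
    D.GenericStep β D.del (D.xi n m h) := by
  intro c₀ c₁ e a b hne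
  simpa using hD.sigma_ne_zero c₀ c₁ 0 e a b (by tauto)

lemma Generic.genericStep_eps (hD : D.Generic ![β]) :
    D.GenericStep β D.eps (D.xi n m h) := by
  intro c₀ c₁ e a b hne
  simpa using hD.sigma_ne_zero c₀ 0 c₁ e a b (by tauto)

variable {x : ℂ}

lemma GenericStep.sigma_ne_zero (hg : D.GenericStep β d x) (c₀ c₁ e : ℤ)
    (hne : ¬ (c₀ = 0 ∧ c₁ = 0 ∧ e = 0)) : D.L.sigma (c₀ * x + c₁ * d + e * β) ≠ 0 := by
  simpa using hg c₀ c₁ e 0 0 (by tauto)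

lemma GenericStep.sigma_κ_ne_zero (hg : D.GenericStep β d x) (i : Fin N) (c₀ c₁ : ℤ) {a : ℤ}
    (ha : a ≠ 0) : D.L.sigma (c₀ * x + c₁ * d + a * D.κ i) ≠ 0 := by
  simpa [Pi.single_apply] using hg c₀ c₁ 0 (Pi.single i a) 0 (by simp [ha])

lemma GenericStep.sigma_κ'_ne_zero (hg : D.GenericStep β d x) (j : Fin N') (c₀ c₁ e : ℤ) :
    D.L.sigma (c₀ * x + c₁ * d + e * β + D.κ' j) ≠ 0 := by
  simpa [Pi.single_apply] using hg c₀ c₁ e 0 (Pi.single j 1) (by simp)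

lemma GenericStep.sigma_κ_add_κ'_ne_zero (hg : D.GenericStep β d x) (i : Fin N) (j : Fin N') :
    D.L.sigma (D.κ i + D.κ' j) ≠ 0 := by
  simpa [Pi.single_apply] using hg 0 0 0 (Pi.single i 1) (Pi.single j 1) (by simp)

lemma GenericStep.Phi_neg_κ_ne_zero (hg : D.GenericStep β d x) (i : Fin N) :
    D.L.Phi d (-D.κ i) ≠ 0 := by
  refine div_ne_zero ?_ (mul_ne_zero ?_ ?_)
  · simpa using hg.sigma_κ_ne_zero i 0 1 (a := -1) (by simp)
  · simpa using hg.sigma_ne_zero 0 1 0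
  · simpa using hg.sigma_κ_ne_zero i 0 0 (a := -1) (by simp)

lemma GenericStep.Phi_κ'_ne_zero (hg : D.GenericStep β d x) (j : Fin N') :
    D.L.Phi d (D.κ' j) ≠ 0 := by
  refine div_ne_zero ?_ (mul_ne_zero ?_ ?_)
  · simpa using hg.sigma_κ'_ne_zero j 0 1 0
  · simpa using hg.sigma_ne_zero 0 1 0
  · simpa using hg.sigma_κ'_ne_zero j 0 0 0

lemma GenericStep.Phi_β_κ'_ne_zero (hg : D.GenericStep β d x) (j : Fin N') :
    D.L.Phi β (D.κ' j) ≠ 0 := by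
  refine div_ne_zero ?_ (mul_ne_zero ?_ ?_)
  · simpa using hg.sigma_κ'_ne_zero j 0 0 1
  · simpa using hg.sigma_ne_zero 0 0 1
  · simpa using hg.sigma_κ'_ne_zero j 0 0 0

end GenericStep

section LatticeStep

/-- The linear background `nζ(δ) + mζ(ε) + hζ(λ)` of the variable `w`. -/
def zetaBackground : ℂ :=
  n * D.L.zeta D.del + m * D.L.zeta D.eps + h * D.L.zeta D.lam

/-- `(n', m', h')` is obtained from `(n, m, h)` by one step in the lattice direction whose
parameter is `d`; the fields record the effect of such a step on the background of the soliton
solution, so that the directions of `δ` and `ε` can be treated alike. -/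
structure IsStep : Prop where
  xi_eq : D.xi n' m' h' = D.xi n m h + d
  ρred_eq : ∀ i, D.ρred n' m' h' i = D.L.Phi d (-D.κ i) * D.ρred n m h i
  νred_eq : ∀ j, D.νred n' m' h' j = D.νred n m h j / D.L.Phi d (D.κ' j)
  zetaBackground_eq : D.zetaBackground n' m' h' = D.zetaBackground n m h + D.L.zeta d

lemma w_eq_zeta_sub_w0_sub_zetaBackground :
    D.w n m h = D.L.zeta (D.xi n m h) - D.w0 n m h - D.zetaBackground n m h := by
  simp only [w, zetaBackground, zsmul_eq_mul]
  ring

/-- The entries of the row vector `sᵀ (χ_{β,K′}(ξ))⁻¹`. -/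
def sχ : Fin N' → ℂ :=
  D.s n m h / fun j => D.L.chi β (D.κ' j) (D.xi n m h)

variable {D β d n m h n' m' h'}

lemma isStep_del (hκ : ∀ i, D.L.Phi D.del (-D.κ i) ≠ 0)
    (hκ' : ∀ j, D.L.Phi D.del (D.κ' j) ≠ 0) : D.IsStep D.del n m h (n + 1) m h where
  xi_eq := by simp only [xi, zsmul_eq_mul]; push_cast; ring
  ρred_eq i := by rw [ρred, ρred, zpow_add_one₀ (hκ i)]; ring
  νred_eq j := by rw [νred, νred, neg_add, zpow_add₀ (hκ' j), _root_.zpow_neg_one]; ring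
  zetaBackground_eq := by simp only [zetaBackground]; push_cast; ring

lemma isStep_eps (hκ : ∀ i, D.L.Phi D.eps (-D.κ i) ≠ 0)
    (hκ' : ∀ j, D.L.Phi D.eps (D.κ' j) ≠ 0) : D.IsStep D.eps n m h n (m + 1) h where
  xi_eq := by simp only [xi, zsmul_eq_mul]; push_cast; ring
  ρred_eq i := by rw [ρred, ρred, zpow_add_one₀ (hκ i)]; ring
  νred_eq j := by rw [νred, νred, neg_add, zpow_add₀ (hκ' j), _root_.zpow_neg_one]; ring
  zetaBackground_eq := by simp only [zetaBackground]; push_cast; ring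

lemma W_eq_one_sub_sχ (hχ : ∀ j, D.L.chi β (D.κ' j) (D.xi n m h) ≠ 0) :
    D.W β n m h = 1 - D.sχ β n m h ⬝ᵥ (D.C *ᵥ D.u0 n m h) := by
  rw [W, DK', dotProduct_inv_diagonal_mulVec hχ]
  rfl

lemma sχ_apply {j : Fin N'} (hχ : D.L.chi β (D.κ' j) (D.xi n m h) ≠ 0)
    (hΦ : D.L.Phi β (D.κ' j) ≠ 0) (hx : D.L.sigma (D.xi n m h) ≠ 0) (hβ : D.L.sigma β ≠ 0)
    (hk : D.L.sigma (D.κ' j) ≠ 0) (hxβ : D.L.sigma (D.xi n m h + β) ≠ 0)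
    (hxβk : D.L.sigma (D.xi n m h + β + D.κ' j) ≠ 0) :
    D.sχ β n m h j =
      D.νred n m h j * D.L.Phi (D.xi n m h + β) (D.κ' j) / D.L.Phi β (D.κ' j) := by
  rw [sχ, Pi.div_apply, s_apply, div_eq_div_iff hχ hΦ, mul_assoc,
    D.L.Phi_mul_Phi_eq_chi_mul hx hβ hk hxβ hxβk]
  ring

lemma one_add_mul_mulVec_u0 (hInv : IsUnit (1 + D.M n m h * D.C).det) :
    (1 + D.M n m h * D.C) *ᵥ D.u0 n m h = D.r n m h := by
  rw [u0, mulVec_mulVec, mul_nonsing_inv _ hInv, one_mulVec]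

namespace IsStep

lemma M_eq_sub_vecMulVec (hst : D.IsStep d n m h n' m' h')
    (hg : D.GenericStep β d (D.xi n m h)) :
    D.M n' m' h' = D.M n m h - vecMulVec (D.r n m h) (D.s n' m' h') := by
  ext i j
  have hΦ := hg.Phi_κ'_ne_zero j
  have hfay := D.L.Phi_fay (x := D.xi n m h) (d := d) (k := D.κ i) (k' := D.κ' j)
    (by simpa using hg.sigma_ne_zero 1 0 0) (by simpa using hg.sigma_ne_zero 0 1 0)
    (by simpa using hg.sigma_ne_zero 1 1 0)
    (by simpa using hg.sigma_κ_ne_zero i 0 0 one_ne_zero)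
    (by simpa using hg.sigma_κ'_ne_zero j 0 0 0) (hg.sigma_κ_add_κ'_ne_zero i j)
  rw [Matrix.sub_apply, vecMulVec_apply, M_apply, M_apply, r_apply, s_apply, hst.xi_eq, hst.ρred_eq,
    hst.νred_eq]
  field_simp
  linear_combination -D.ρred n m h i * D.νred n m h j * hfay

lemma r_apply (hst : D.IsStep d n m h n' m' h') (hg : D.GenericStep β d (D.xi n m h))
    (i : Fin N) :
    D.r n' m' h' i =
      (D.L.zeta d - D.L.zeta (D.xi n' m' h') + D.L.zeta (D.xi n m h + D.κ i) -
        D.L.zeta (D.κ i)) * D.r n m h i := by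
  have hΦ := D.L.Phi_add_mul_Phi_neg (x := D.xi n m h) (d := d) (k := D.κ i)
    (by simpa using hg.sigma_ne_zero 1 0 0) (by simpa using hg.sigma_ne_zero 0 1 0)
    (by simpa using hg.sigma_ne_zero 1 1 0)
    (by simpa using hg.sigma_κ_ne_zero i 0 0 one_ne_zero)
    (by simpa using hg.sigma_κ_ne_zero i 1 0 one_ne_zero)
  rw [KPData.r_apply, KPData.r_apply, hst.xi_eq, hst.ρred_eq]
  linear_combination D.ρred n m h i * hΦ

lemma chi_smul_sχ (hst : D.IsStep d n m h n' m' h') (hg : D.GenericStep β d (D.xi n m h))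
    (hχ : ∀ j, D.L.chi β (D.κ' j) (D.xi n m h) ≠ 0)
    (hχ' : ∀ j, D.L.chi β (D.κ' j) (D.xi n' m' h') ≠ 0) :
    D.L.chi β (-d) (D.xi n' m' h') • D.sχ β n' m' h' = D.s n' m' h' - D.sχ β n m h := by
  ext j
  have hd : D.L.sigma d ≠ 0 := by simpa using hg.sigma_ne_zero 0 1 0
  have hβ : D.L.sigma β ≠ 0 := by simpa using hg.sigma_ne_zero 0 0 1
  have hk : D.L.sigma (D.κ' j) ≠ 0 := by simpa using hg.sigma_κ'_ne_zero j 0 0 0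
  have hx : D.L.sigma (D.xi n m h) ≠ 0 := by simpa using hg.sigma_ne_zero 1 0 0
  have hxd : D.L.sigma (D.xi n m h + d) ≠ 0 := by simpa using hg.sigma_ne_zero 1 1 0
  have hxβ : D.L.sigma (D.xi n m h + β) ≠ 0 := by simpa using hg.sigma_ne_zero 1 0 1
  have hxdβ : D.L.sigma (D.xi n m h + d + β) ≠ 0 := by simpa using hg.sigma_ne_zero 1 1 1
  have hxβk : D.L.sigma (D.xi n m h + β + D.κ' j) ≠ 0 := by
    simpa using hg.sigma_κ'_ne_zero j 1 0 1
  have hxdβk : D.L.sigma (D.xi n m h + d + β + D.κ' j) ≠ 0 := by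
    simpa using hg.sigma_κ'_ne_zero j 1 1 1
  have hΦd := hg.Phi_κ'_ne_zero j
  have hΦβ := hg.Phi_β_κ'_ne_zero j
  have hΦ := D.L.chi_neg_mul_Phi hd hβ hk hxd hxβ hxdβ hxdβk
  rw [Pi.smul_apply, Pi.sub_apply, smul_eq_mul, sχ_apply (hχ j) hΦβ hx hβ hk hxβ hxβk,
    sχ_apply (hχ' j) hΦβ (by rwa [hst.xi_eq]) hβ hk (by rwa [hst.xi_eq]) (by rwa [hst.xi_eq]),
    s_apply, hst.xi_eq, hst.νred_eq]
  field_simp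
  linear_combination D.νred n m h j * hΦ

lemma one_add_mul_mulVec_u0 (hst : D.IsStep d n m h n' m' h')
    (hg : D.GenericStep β d (D.xi n m h)) (hInv' : IsUnit (1 + D.M n' m' h' * D.C).det) :
    (1 + D.M n m h * D.C) *ᵥ D.u0 n' m' h' = D.r n' m' h' + D.w0 n' m' h' • D.r n m h := by
  rw [one_add_mul_mulVec_eq_add_smul _ _ (D.r n m h) (D.s n' m' h'),
    ← hst.M_eq_sub_vecMulVec hg, KPData.one_add_mul_mulVec_u0 hInv']
  rfl

lemma chi_mul_W (hst : D.IsStep d n m h n' m' h') (hg : D.GenericStep β d (D.xi n m h))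
    (hχ : ∀ j, D.L.chi β (D.κ' j) (D.xi n m h) ≠ 0)
    (hχ' : ∀ j, D.L.chi β (D.κ' j) (D.xi n' m' h') ≠ 0) :
    D.L.chi β (-d) (D.xi n' m' h') * D.W β n' m' h' =
      D.L.chi β (-d) (D.xi n' m' h') - D.w0 n' m' h' +
        D.sχ β n m h ⬝ᵥ (D.C *ᵥ D.u0 n' m' h') := by
  rw [W_eq_one_sub_sχ hχ', mul_sub, mul_one, ← smul_eq_mul, ← smul_dotProduct,
    hst.chi_smul_sχ hg hχ hχ', sub_dotProduct, sub_add]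
  rfl

lemma chi_neg (hst : D.IsStep d n m h n' m' h') :
    D.L.chi β (-d) (D.xi n' m' h') =
      D.L.zeta β - D.L.zeta d + D.L.zeta (D.xi n' m' h') - D.L.zeta (D.xi n m h + β) := by
  rw [EllLattice.chi, EllLattice.zeta_neg, hst.xi_eq, add_right_comm (D.xi n m h) d β,
    add_neg_cancel_right, ← sub_eq_add_neg]

variable {d₁ d₂ : ℂ} {n₁ m₁ h₁ n₂ m₂ h₂ : ℤ}

lemma w_sub_w (hst₁ : D.IsStep d₁ n m h n₁ m₁ h₁) (hst₂ : D.IsStep d₂ n m h n₂ m₂ h₂) :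
    D.w n₁ m₁ h₁ - D.w n₂ m₂ h₂ =
      (D.L.zeta (D.xi n₁ m₁ h₁) - D.w0 n₁ m₁ h₁ - D.L.zeta d₁) -
        (D.L.zeta (D.xi n₂ m₂ h₂) - D.w0 n₂ m₂ h₂ - D.L.zeta d₂) := by
  rw [w_eq_zeta_sub_w0_sub_zetaBackground, w_eq_zeta_sub_w0_sub_zetaBackground,
    hst₁.zetaBackground_eq, hst₂.zetaBackground_eq]
  ring

lemma u0_sub_u0 (hst₁ : D.IsStep d₁ n m h n₁ m₁ h₁) (hst₂ : D.IsStep d₂ n m h n₂ m₂ h₂)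
    (hg₁ : D.GenericStep β d₁ (D.xi n m h)) (hg₂ : D.GenericStep β d₂ (D.xi n m h))
    (hInv : IsUnit (1 + D.M n m h * D.C).det) (hInv₁ : IsUnit (1 + D.M n₁ m₁ h₁ * D.C).det)
    (hInv₂ : IsUnit (1 + D.M n₂ m₂ h₂ * D.C).det) :
    D.u0 n₂ m₂ h₂ - D.u0 n₁ m₁ h₁ = (D.w n₁ m₁ h₁ - D.w n₂ m₂ h₂) • D.u0 n m h := by
  refine mulVec_injective_of_isUnit ((isUnit_iff_isUnit_det _).2 hInv) ?_
  rw [mulVec_sub, hst₁.one_add_mul_mulVec_u0 hg₁ hInv₁,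
    hst₂.one_add_mul_mulVec_u0 hg₂ hInv₂, mulVec_smul,
    KPData.one_add_mul_mulVec_u0 hInv, hst₁.w_sub_w hst₂]
  ext i
  simp only [Pi.sub_apply, Pi.add_apply, Pi.smul_apply, smul_eq_mul, hst₁.r_apply hg₁ i,
    hst₂.r_apply hg₂ i]
  ring

theorem W_mul_w_sub_w (hst₁ : D.IsStep d₁ n m h n₁ m₁ h₁) (hst₂ : D.IsStep d₂ n m h n₂ m₂ h₂)
    (hg₁ : D.GenericStep β d₁ (D.xi n m h)) (hg₂ : D.GenericStep β d₂ (D.xi n m h))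
    (hInv : IsUnit (1 + D.M n m h * D.C).det) (hInv₁ : IsUnit (1 + D.M n₁ m₁ h₁ * D.C).det)
    (hInv₂ : IsUnit (1 + D.M n₂ m₂ h₂ * D.C).det)
    (hχ : ∀ j, D.L.chi β (D.κ' j) (D.xi n m h) ≠ 0)
    (hχ₁ : ∀ j, D.L.chi β (D.κ' j) (D.xi n₁ m₁ h₁) ≠ 0)
    (hχ₂ : ∀ j, D.L.chi β (D.κ' j) (D.xi n₂ m₂ h₂) ≠ 0) :
    D.W β n m h * (D.w n₁ m₁ h₁ - D.w n₂ m₂ h₂) =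
      D.L.chi β (-d₁) (D.xi n₁ m₁ h₁) * D.W β n₁ m₁ h₁ -
        D.L.chi β (-d₂) (D.xi n₂ m₂ h₂) * D.W β n₂ m₂ h₂ := by
  have hsχ : D.sχ β n m h ⬝ᵥ (D.C *ᵥ D.u0 n₂ m₂ h₂) - D.sχ β n m h ⬝ᵥ (D.C *ᵥ D.u0 n₁ m₁ h₁) =
      (D.w n₁ m₁ h₁ - D.w n₂ m₂ h₂) * (D.sχ β n m h ⬝ᵥ (D.C *ᵥ D.u0 n m h)) := by
    rw [← dotProduct_sub, ← mulVec_sub, hst₁.u0_sub_u0 hst₂ hg₁ hg₂ hInv hInv₁ hInv₂, mulVec_smul,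
      dotProduct_smul, smul_eq_mul]
  rw [hst₁.chi_mul_W hg₁ hχ hχ₁, hst₂.chi_mul_W hg₂ hχ hχ₂,
    hst₁.chi_neg, hst₂.chi_neg, W_eq_one_sub_sχ hχ]
  linear_combination hsχ + hst₁.w_sub_w hst₂

end IsStep

end LatticeStep

end KPData

/-- Nonlinear shift relation `W_β (w̃ − ŵ) = χ_{β,−δ}(ξ+δ) W̃_β − χ_{β,−ε}(ξ+ε) Ŵ_β`. -/
theorem W_w_nonlinear_relation {N N' : ℕ} (D : KPData N N') (β : ℂ)
    (hρ0 : ∀ i, D.ρ0 i ≠ 0) (hν0 : ∀ j, D.ν0 j ≠ 0)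
    (hgen : D.Generic ![β])
    (hInv : ∀ n m h : ℤ, IsUnit ((1 + D.M n m h * D.C).det))
    (hχβ : ∀ (n m h : ℤ) (j : Fin N'), D.L.chi β (D.κ' j) (D.xi n m h) ≠ 0) :
    ∀ n m h : ℤ,
      D.W β n m h * (D.w (n + 1) m h - D.w n (m + 1) h) =
        D.L.chi β (-D.del) (D.xi (n + 1) m h) * D.W β (n + 1) m h -
          D.L.chi β (-D.eps) (D.xi n (m + 1) h) * D.W β n (m + 1) h := by
  intro n m h
  have hδ := hgen.genericStep_del (n := n) (m := m) (h := h)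
  have hε := hgen.genericStep_eps (n := n) (m := m) (h := h)
  have hst_δ := KPData.isStep_del (n := n) (m := m) (h := h)
    hδ.Phi_neg_κ_ne_zero hδ.Phi_κ'_ne_zero
  have hst_ε := KPData.isStep_eps (n := n) (m := m) (h := h)
    hε.Phi_neg_κ_ne_zero hε.Phi_κ'_ne_zero
  exact hst_δ.W_mul_w_sub_w hst_ε hδ hε (hInv _ _ _) (hInv _ _ _) (hInv _ _ _)
    (hχβ _ _ _) (hχβ _ _ _) (hχβ _ _ _)
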